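/- arXiv:1412.6461 — 5 statements merged into one kernel-verified Lean document; each statement's English description precedes it below -/
import Mathlib

section
/- Define D(p,q,w) := w² − p·w − q and the rational functions X := −1/D and Y := −(w−p)/D. Then for all real numbers p, q, r, s, w with D(p,q,w) ≠ 0, setting t := q·r − p·s − 1, the identity (∂X/∂p)·s + (∂X/∂q)·t + (∂X/∂w)·Y = (∂Y/∂p)·r + (∂Y/∂q)·s + (∂Y/∂w)·X holds, all partial derivatives being taken at the point (p,q,w). (Here p,q,r,s,t stand for u_x,u_y,u_xx,u_xy,u_yy, t being eliminated via the Gibbons–Tsarev equation; the identity is exactly the cross-derivative compatibility condition asserting that the system w_x = X, w_y = Y is a differential covering of the Gibbons–Tsarev equation.) -/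
/-- Denominator `D(p,q,w) = w² − pw − q` of the covering of the Gibbons–Tsarev
equation. -/
noncomputable def covD (p q w : ℝ) : ℝ := w ^ 2 - p * w - q

/-- `X = −1/D` from the covering of the Gibbons–Tsarev equation. -/
noncomputable def covX (p q w : ℝ) : ℝ := -1 / covD p q w

/-- `Y = −(w − p)/D` from the covering of the Gibbons–Tsarev equation. -/
noncomputable def covY (p q w : ℝ) : ℝ := -(w - p) / covD p q w

/-- Cross-derivative compatibility `D_y(X) = D_x(Y)` of the covering
`w_x = X`, `w_y = Y` over the Gibbons–Tsarev equation
`u_yy = u_y·u_xx − u_x·u_xy − 1`, where `p,q,r,s,t` stand for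
`u_x,u_y,u_xx,u_xy,u_yy` and `t = q·r − p·s − 1` is eliminated via the equation. -/
theorem covering_GT_compatibility (p q r s w : ℝ)
    (hD : covD p q w ≠ 0) :
    deriv (fun p' => covX p' q w) p * s
      + deriv (fun q' => covX p q' w) q * (q * r - p * s - 1)
      + deriv (fun w' => covX p q w') w * covY p q w
    = deriv (fun p' => covY p' q w) p * r
      + deriv (fun q' => covY p q' w) q * s
      + deriv (fun w' => covY p q w') w * covX p q w := by
  have dD1 : HasDerivAt (fun p' => covD p' q w) (-w) p := by
    unfold covD
    have h := (((hasDerivAt_id p).mul_const w).const_sub (w ^ 2)).sub_const q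
    simpa using h
  have dD2 : HasDerivAt (fun q' => covD p q' w) (-1) q := by
    unfold covD
    exact (hasDerivAt_id q).const_sub (w ^ 2 - p * w)
  have dD3 : HasDerivAt (fun w' => covD p q w') (2 * w - p) w := by
    unfold covD
    have h := (((hasDerivAt_id w).pow 2).sub ((hasDerivAt_id w).const_mul p)).sub_const q
    simpa using h
  have n1 : HasDerivAt (fun p' : ℝ => -(w - p')) 1 p := by
    simpa using (hasDerivAt_id p).sub_const w
  have n3 : HasDerivAt (fun w' : ℝ => -(w' - p)) (-1) w :=
    ((hasDerivAt_id w).sub_const p).neg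
  have x1 := ((hasDerivAt_const p (-1 : ℝ)).fun_div dD1 hD).deriv
  have x2 := ((hasDerivAt_const q (-1 : ℝ)).fun_div dD2 hD).deriv
  have x3 := ((hasDerivAt_const w (-1 : ℝ)).fun_div dD3 hD).deriv
  have y1 := (n1.fun_div dD1 hD).deriv
  have y2 := ((hasDerivAt_const q (-(w - p))).fun_div dD2 hD).deriv
  have y3 := (n3.fun_div dD3 hD).deriv
  unfold covX covY
  rw [x1, x2, x3, y1, y2, y3]
  field_simp
  unfold covD
  ring
end

section
/- Let u : ℝ² → ℝ be a smooth solution of Equation (1): u_y·u_xy − u_x·u_yy = e^y·u_xx, with u_x nowhere zero, and let v : ℝ² → ℝ be a smooth function satisfying v_x = u_y/u_x and v_y = e^y/u_x on ℝ². Then v satisfies the equation v_y − v_yy = v_y·v_xx − v_x·v_xy at every point of ℝ². -/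
/-- Partial derivative of a function on `ℝ²` in the direction `v`. -/
noncomputable def pd (v : ℝ × ℝ) (f : ℝ × ℝ → ℝ) : ℝ × ℝ → ℝ :=
  fun p => fderiv ℝ f p v

/-- Coordinates are `(x, y)`. -/
noncomputable def dx : (ℝ × ℝ → ℝ) → ℝ × ℝ → ℝ := pd (1, 0)
noncomputable def dy : (ℝ × ℝ → ℝ) → ℝ × ℝ → ℝ := pd (0, 1)

theorem pd_smooth (w : ℝ × ℝ) (f : ℝ × ℝ → ℝ) (hf : ContDiff ℝ (⊤ : ℕ∞) f) :
    Differentiable ℝ (pd w f) := by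
  have h : ContDiff ℝ 1 (fderiv ℝ f) :=
    hf.fderiv_right (by norm_cast)
  have h2 : Differentiable ℝ (fderiv ℝ f) := h.differentiable (by norm_num)
  unfold pd
  exact fun p => (h2 p).clm_apply (differentiableAt_const w)

theorem pd_pd (w z : ℝ × ℝ) (f : ℝ × ℝ → ℝ) (hf : ContDiff ℝ (⊤ : ℕ∞) f) (p : ℝ × ℝ) :
    pd w (pd z f) p = fderiv ℝ (fderiv ℝ f) p w z := by
  have h : ContDiff ℝ 1 (fderiv ℝ f) :=
    hf.fderiv_right (by norm_cast)
  have h2 : Differentiable ℝ (fderiv ℝ f) := h.differentiable (by norm_num)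
  unfold pd
  rw [fderiv_clm_apply (h2 p) (differentiableAt_const z)]
  simp

theorem pd_comm (w z : ℝ × ℝ) (f : ℝ × ℝ → ℝ) (hf : ContDiff ℝ (⊤ : ℕ∞) f) (p : ℝ × ℝ) :
    pd w (pd z f) p = pd z (pd w f) p := by
  rw [pd_pd w z f hf, pd_pd z w f hf]
  have h : IsSymmSndFDerivAt ℝ f p := by
    apply hf.contDiffAt.isSymmSndFDerivAt
    simp
    norm_cast
  exact h w z

theorem pd_mul (w : ℝ × ℝ) (f g : ℝ × ℝ → ℝ) (hf : Differentiable ℝ f)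
    (hg : Differentiable ℝ g) (p : ℝ × ℝ) :
    pd w (fun q => f q * g q) p = f p * pd w g p + g p * pd w f p := by
  unfold pd
  rw [fderiv_fun_mul (hf p) (hg p)]
  simp

theorem pd_exp (w : ℝ × ℝ) (p : ℝ × ℝ) :
    pd w (fun q => Real.exp q.2) p = Real.exp p.2 * w.2 := by
  unfold pd
  have h := (hasFDerivAt_snd (𝕜 := ℝ) (p := p)).exp
  rw [h.fderiv]
  simp

/-- If `u` is a smooth solution of Equation (1)
`u_y·u_xy − u_x·u_yy = e^y·u_xx` with `u_x` nowhere zero, and `v` is a smooth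
potential with `v_x = u_y/u_x` and `v_y = e^y/u_x`, then
`v_y − v_yy = v_y·v_xx − v_x·v_xy`. -/
theorem eq1_potential_equation (u v : ℝ × ℝ → ℝ)
    (hu : ContDiff ℝ (⊤ : ℕ∞) u) (hv : ContDiff ℝ (⊤ : ℕ∞) v)
    (hx : ∀ p : ℝ × ℝ, dx u p ≠ 0)
    (hsol : ∀ p : ℝ × ℝ,
      dy u p * dy (dx u) p - dx u p * dy (dy u) p = Real.exp p.2 * dx (dx u) p)
    (hvx : ∀ p : ℝ × ℝ, dx v p = dy u p / dx u p)
    (hvy : ∀ p : ℝ × ℝ, dy v p = Real.exp p.2 / dx u p) :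
    ∀ p : ℝ × ℝ,
      dy v p - dy (dy v) p = dy v p * dx (dx v) p - dx v p * dy (dx v) p := by
  intro p
  have ha : Differentiable ℝ (dx u) := pd_smooth _ u hu
  have hc : Differentiable ℝ (dx v) := pd_smooth _ v hv
  have hd : Differentiable ℝ (dy v) := pd_smooth _ v hv
  have e1 : (fun q => dx v q * dx u q) = dy u := by
    funext q
    rw [hvx q, div_mul_cancel₀ _ (hx q)]
  have e2 : (fun q => dy v q * dx u q) = fun q => Real.exp q.2 := by
    funext q
    rw [hvy q, div_mul_cancel₀ _ (hx q)]
  have hxx : dx v p * dx (dx u) p + dx u p * dx (dx v) p = dx (dy u) p := by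
    rw [← e1]
    exact (pd_mul (1, 0) _ _ hc ha p).symm
  have hxy : dx v p * dy (dx u) p + dx u p * dy (dx v) p = dy (dy u) p := by
    rw [← e1]
    exact (pd_mul (0, 1) _ _ hc ha p).symm
  have hyy : dy v p * dy (dx u) p + dx u p * dy (dy v) p = Real.exp p.2 := by
    have h1 := pd_mul (0, 1) _ _ hd ha p
    rw [e2, pd_exp] at h1
    simpa [dy] using h1.symm
  have hcomm : dx (dy u) p = dy (dx u) p := pd_comm _ _ u hu p
  have g1 : dx v p * dx u p = dy u p := congrFun e1 p
  have g2 : dy v p * dx u p = Real.exp p.2 := congrFun e2 p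
  have hs := hsol p
  rw [hcomm] at hxx
  have h0 := hx p
  generalize dx u p = a at *
  generalize dy u p = b at *
  generalize dx v p = c at *
  generalize dy v p = d at *
  generalize dx (dx u) p = ax at *
  generalize dy (dx u) p = ay at *
  generalize dy (dy u) p = bb at *
  generalize dx (dx v) p = cx at *
  generalize dy (dx v) p = cy at *
  generalize dy (dy v) p = dd at *
  generalize Real.exp p.2 = E at *
  subst g1 g2
  have hs2 : c * ay - bb = d * ax := by
    apply mul_left_cancel₀ h0
    linear_combination hs
  apply mul_left_cancel₀ h0
  linear_combination (-1) * hyy - d * hxx + c * hxy - c * hs2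
end

section
/- Let u : ℝ² → ℝ be a smooth solution of Equation (E2): u_yy = (u_x + x)·u_xy − u_y·(u_xx + 2), such that u_y is nowhere zero. Then the pair P := −e^{−y}/u_y, Q := −(u_x + x)·e^{−y}/u_y is a conservation law: ∂P/∂y = ∂Q/∂x at every point of ℝ². -/
theorem pd_contDiff (v : ℝ × ℝ) (u : ℝ × ℝ → ℝ) (hu : ContDiff ℝ (⊤ : ℕ∞) u) :
    ContDiff ℝ (⊤ : ℕ∞) (pd v u) := by
  unfold pd
  exact (hu.fderiv_right (m := (⊤ : ℕ∞)) (by simp)).clm_apply contDiff_const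

theorem pd_eq_deriv (v : ℝ × ℝ) (f : ℝ × ℝ → ℝ) (p : ℝ × ℝ) (hf : DifferentiableAt ℝ f p) :
    HasDerivAt (fun t : ℝ => f (p + t • v)) (pd v f p) 0 := 
  hf.hasFDerivAt.hasLineDerivAt v

theorem pd_symm (u : ℝ × ℝ → ℝ) (hu : ContDiff ℝ (⊤ : ℕ∞) u) (v w p : ℝ × ℝ) :
    pd v (pd w u) p = pd w (pd v u) p := by
  have hd : DifferentiableAt ℝ (fderiv ℝ u) p :=
    ((hu.fderiv_right (m := (⊤ : ℕ∞)) (by simp)).differentiable (by simp)) p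
  have key : ∀ a b : ℝ × ℝ, pd a (pd b u) p = fderiv ℝ (fderiv ℝ u) p a b := by
    intro a b
    have h := (hd.hasFDerivAt.clm_apply (hasFDerivAt_const b p)).fderiv
    change fderiv ℝ (fun q => fderiv ℝ u q b) p a = _
    rw [h]; simp
  rw [key, key]
  have hs : IsSymmSndFDerivAt ℝ u p := hu.contDiffAt.isSymmSndFDerivAt (by simp; exact WithTop.coe_le_coe.2 (le_top : (2 : ℕ∞) ≤ ⊤))
  exact hs.eq v w

/-- For a smooth solution `u` of Equation (E2)
`u_yy = (u_x + x)·u_xy − u_y·(u_xx + 2)` with `u_y` nowhere zero, the pair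
`P = −e^{−y}/u_y`, `Q = −(u_x + x)·e^{−y}/u_y` is a conservation law:
`∂P/∂y = ∂Q/∂x`. -/
theorem E2_conservation_law (u : ℝ × ℝ → ℝ)
    (hu : ContDiff ℝ (⊤ : ℕ∞) u)
    (hy : ∀ p : ℝ × ℝ, dy u p ≠ 0)
    (hsol : ∀ p : ℝ × ℝ,
      dy (dy u) p = (dx u p + p.1) * dy (dx u) p - dy u p * (dx (dx u) p + 2)) :
    ∀ p : ℝ × ℝ,
      dy (fun q => -Real.exp (-q.2) / dy u q) p
        = dx (fun q => -(dx u q + q.1) * Real.exp (-q.2) / dy u q) p := by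
  intro p
  have ha := (pd_contDiff (1, 0) u hu).differentiable (by simp)
  have hb := (pd_contDiff (0, 1) u hu).differentiable (by simp)
  have hs := pd_symm u hu (1, 0) (0, 1) p
  have h0 := hsol p
  have hne := hy p
  unfold dx dy at *
  have e1 : DifferentiableAt ℝ (fun q : ℝ × ℝ => -Real.exp (-q.2) / pd (0, 1) u q) p := by
    have := hb p
    fun_prop (disch := exact hne)
  have e2 : DifferentiableAt ℝ
      (fun q : ℝ × ℝ => -(pd (1, 0) u q + q.1) * Real.exp (-q.2) / pd (0, 1) u q) p := by
    have := hb p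
    have := ha p
    fun_prop (disch := exact hne)
  have d1 := pd_eq_deriv (0, 1) _ p e1
  have d2 := pd_eq_deriv (1, 0) _ p e2
  have hyy := pd_eq_deriv (0, 1) _ p (hb p)
  have hxy := pd_eq_deriv (1, 0) _ p (hb p)
  have hxx := pd_eq_deriv (1, 0) _ p (ha p)
  have lin : ∀ c : ℝ, HasDerivAt (fun t : ℝ => c + t) 1 0 := fun c =>
    (hasDerivAt_id (0 : ℝ)).const_add c
  have f1 := ((lin p.2).fun_neg.exp.fun_neg).fun_div hyy (by simpa using hne)
  have f2 := (((hxx.fun_add (lin p.1)).fun_neg.mul_const (Real.exp (-p.2)))).fun_div hxy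
    (by simpa using hne)
  have g1 := d1.unique (by simpa using f1)
  have g2 := d2.unique (by simpa using f2)
  rw [g1, g2, hs, h0]
  field_simp
  ring
end

section
/- Let u : ℝ² → ℝ be a smooth solution of Equation (E3): u_xx = (x − u_y)·u_xy + (2y + u_x)·u_yy − u_y. Then the pair P := −u_y·u_x − 2y·u_y + 4u, Q := −u_y² + x·u_y − u_x is a conservation law: ∂P/∂y = ∂Q/∂x at every point of ℝ². -/
/-- For a smooth solution `u` of Equation (E3)
`u_xx = (x − u_y)·u_xy + (2y + u_x)·u_yy − u_y`, the pair
`P = −u_y·u_x − 2y·u_y + 4u`, `Q = −u_y² + x·u_y − u_x` is a conservation law: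
`∂P/∂y = ∂Q/∂x`. -/
theorem E3_conservation_law (u : ℝ × ℝ → ℝ)
    (hu : ContDiff ℝ (⊤ : ℕ∞) u)
    (hsol : ∀ p : ℝ × ℝ,
      dx (dx u) p =
        (p.1 - dy u p) * dy (dx u) p + (2 * p.2 + dx u p) * dy (dy u) p - dy u p) :
    ∀ p : ℝ × ℝ,
      dy (fun q => -dy u q * dx u q - 2 * q.2 * dy u q + 4 * u q) p
        = dx (fun q => -(dy u q) ^ 2 + q.1 * dy u q - dx u q) p := by
  intro p
  have hd : ∀ v : ℝ × ℝ, Differentiable ℝ (pd v u) := by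
    intro v
    have h1 : ContDiff ℝ 1 (fderiv ℝ u) := hu.fderiv_right (by norm_cast)
    have h2 : ContDiff ℝ 1 (fun p => fderiv ℝ u p v) := h1.clm_apply contDiff_const
    exact h2.differentiable (by norm_num)
  have hX : HasFDerivAt (dx u) (fderiv ℝ (dx u) p) p := (hd (1, 0) p).hasFDerivAt
  have hY : HasFDerivAt (dy u) (fderiv ℝ (dy u) p) p := (hd (0, 1) p).hasFDerivAt
  have hU : HasFDerivAt u (fderiv ℝ u p) p :=
    (hu.differentiable (by norm_num) p).hasFDerivAt
  have hf : HasFDerivAt (fun q : ℝ × ℝ => q.1) (ContinuousLinearMap.fst ℝ ℝ ℝ) p := hasFDerivAt_fst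
  have hs : HasFDerivAt (fun q : ℝ × ℝ => q.2) (ContinuousLinearMap.snd ℝ ℝ ℝ) p := hasFDerivAt_snd
  have hsym : dx (dy u) p = dy (dx u) p := by
    have hdd : DifferentiableAt ℝ (fderiv ℝ u) p := by
      have h1 : ContDiff ℝ 1 (fderiv ℝ u) := hu.fderiv_right (by norm_cast)
      exact h1.differentiable (by norm_num) p
    have key : ∀ v w : ℝ × ℝ, pd v (pd w u) p = fderiv ℝ (fderiv ℝ u) p v w := by
      intro v w
      have h := hdd.hasFDerivAt.clm_apply (hasFDerivAt_const w p)
      have h' : fderiv ℝ (pd w u) p = _ := h.fderiv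
      unfold pd at h' ⊢
      rw [h']
      simp
    have hs2 : IsSymmSndFDerivAt ℝ u p :=
      hu.contDiffAt.isSymmSndFDerivAt (by simp; exact WithTop.coe_le_coe.2 (le_top : (2 : ℕ∞) ≤ ⊤))
    unfold dx dy
    rw [key, key]
    exact hs2 _ _
  have hP := (((hY.neg.mul hX).sub ((hs.const_mul 2).mul hY)).add (hU.const_mul 4)).fderiv
  have hQ := (((hY.pow 2).neg.add (hf.mul hY)).sub hX).fderiv
  have hP' : dy (fun q => -dy u q * dx u q - 2 * q.2 * dy u q + 4 * u q) p
      = -dy u p * dy (dx u) p - dx u p * dy (dy u) p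
        - (2 * p.2 * dy (dy u) p + 2 * dy u p) + 4 * dy u p := by
    have h := congrArg (fun L : ℝ × ℝ →L[ℝ] ℝ => L (0, 1)) hP
    refine Eq.trans h ?_
    simp [show ∀ f q, fderiv ℝ f q (0, 1) = dy f q from fun _ _ => rfl]
    ring
  have hQ' : dx (fun q => -(dy u q) ^ 2 + q.1 * dy u q - dx u q) p
      = -(2 * dy u p * dx (dy u) p) + (p.1 * dx (dy u) p + dy u p) - dx (dx u) p := by
    have h := congrArg (fun L : ℝ × ℝ →L[ℝ] ℝ => L (1, 0)) hQ
    refine Eq.trans h ?_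
    simp [show ∀ f q, fderiv ℝ f q (1, 0) = dx f q from fun _ _ => rfl]
  rw [hP', hQ', hsym, hsol p]
  ring
end

section
/- Let u : ℝ² → ℝ be a smooth solution of Equation (E3): u_xx = (x − u_y)·u_xy + (2y + u_x)·u_yy − u_y, such that x·u_y − u_x − 2y is nowhere zero. Then the pair P := u_y/(x·u_y − u_x − 2y), Q := −1/(x·u_y − u_x − 2y) is a conservation law: ∂P/∂y = ∂Q/∂x at every point of ℝ². -/
/-- For a smooth solution `u` of Equation (E3)
`u_xx = (x − u_y)·u_xy + (2y + u_x)·u_yy − u_y` with `x·u_y − u_x − 2y` nowhere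
zero, the pair `P = u_y/(x·u_y − u_x − 2y)`, `Q = −1/(x·u_y − u_x − 2y)` is a
conservation law: `∂P/∂y = ∂Q/∂x`. -/
theorem E3_conservation_law' (u : ℝ × ℝ → ℝ)
    (hu : ContDiff ℝ (⊤ : ℕ∞) u)
    (hden : ∀ p : ℝ × ℝ, p.1 * dy u p - dx u p - 2 * p.2 ≠ 0)
    (hsol : ∀ p : ℝ × ℝ,
      dx (dx u) p =
        (p.1 - dy u p) * dy (dx u) p + (2 * p.2 + dx u p) * dy (dy u) p - dy u p) :
    ∀ p : ℝ × ℝ,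
      dy (fun q => dy u q / (q.1 * dy u q - dx u q - 2 * q.2)) p
        = dx (fun q => -1 / (q.1 * dy u q - dx u q - 2 * q.2)) p := by
  intro p
  have hf : ContDiff ℝ 1 (fderiv ℝ u) := hu.fderiv_right (by norm_cast)
  have hfd : DifferentiableAt ℝ (fderiv ℝ u) p := hf.differentiable (by norm_num) p
  have key : ∀ v w : ℝ × ℝ, pd w (pd v u) p = fderiv ℝ (fderiv ℝ u) p w v := by
    intro v w
    have h : HasFDerivAt (fun q => fderiv ℝ u q v)
        ((ContinuousLinearMap.apply ℝ ℝ v).comp (fderiv ℝ (fderiv ℝ u) p)) p :=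
      (ContinuousLinearMap.apply ℝ ℝ v).hasFDerivAt.comp p hfd.hasFDerivAt
    unfold pd
    rw [h.fderiv]
    simp
  have hpd : ∀ v : ℝ × ℝ, DifferentiableAt ℝ (pd v u) p := by
    intro v
    exact hfd.clm_apply (differentiableAt_const v)
  have hsymm : dx (dy u) p = dy (dx u) p := by
    have h2 : IsSymmSndFDerivAt ℝ u p := by
      apply hu.contDiffAt.isSymmSndFDerivAt
      simp only [minSmoothness_of_isRCLikeNormedField]
      norm_cast
    unfold dx dy
    rw [key, key]
    exact h2 _ _
  have ha : HasFDerivAt (dy u) (fderiv ℝ (dy u) p) p := (hpd (0, 1)).hasFDerivAt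
  have hb : HasFDerivAt (dx u) (fderiv ℝ (dx u) p) p := (hpd (1, 0)).hasFDerivAt
  have hx : HasFDerivAt (fun q : ℝ × ℝ => q.1) (ContinuousLinearMap.fst ℝ ℝ ℝ) p := hasFDerivAt_fst
  have hy : HasFDerivAt (fun q : ℝ × ℝ => q.2) (ContinuousLinearMap.snd ℝ ℝ ℝ) p := hasFDerivAt_snd
  have hD := ((hx.mul ha).sub hb).sub (hy.const_mul 2)
  have hd := hden p
  have hP := ha.mul ((hasDerivAt_inv hd).comp_hasFDerivAt p hD)
  have hQ := ((hasDerivAt_inv hd).comp_hasFDerivAt p hD).const_mul (-1)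
  have e1 : dy (fun q => dy u q / (q.1 * dy u q - dx u q - 2 * q.2)) p = _ :=
    congrArg (fun L : ℝ × ℝ →L[ℝ] ℝ => L (0, 1)) hP.fderiv
  have e2 : dx (fun q => -1 / (q.1 * dy u q - dx u q - 2 * q.2)) p = _ :=
    congrArg (fun L : ℝ × ℝ →L[ℝ] ℝ => L (1, 0)) hQ.fderiv
  rw [e1, e2]
  have a1 : fderiv ℝ (dy u) p (1, 0) = dy (dx u) p := hsymm
  have a2 : fderiv ℝ (dy u) p (0, 1) = dy (dy u) p := rfl
  have b1 : fderiv ℝ (dx u) p (1, 0) = dx (dx u) p := rfl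
  have b2 : fderiv ℝ (dx u) p (0, 1) = dy (dx u) p := rfl
  simp [a1, a2, b1, b2]
  rw [hsol p]
  field_simp
  ring
end
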